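/- Let n and q be positive integers. If there exists a partition of {1, …, q} into n weakly sum-free subsets, then there exists a q-WS-template with width q + ⌈q/2⌉ + 1 and n + 1 colors. (This is the lower bound (3/2)·WS(n) + 1 ≤ WS⁺(n+1), where WS⁺(m) is the greatest width of a b-WS-template with m colors over all b.) -/

import Mathlib

/-!
Write `h = ⌈q/2⌉` and `a = q + h + 1`. The special colour is the interval `{q+1, …, 2q+1}`, and each
of the remaining numbers `2q+2, …, 2q+h+1`, being `a + t` with `q+1-h ≤ t ≤ q`, gets the colour of
`t`.

The interval is sum-free, and two of its elements sum to at most `4q + 2 ≤ q + 2a`. For an ordinary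
colour, `(a + t) + y = a + t'` reduces to `t + y = t'` inside `A i`; equality `t = y` is impossible
because `2t ≥ 2(q+1-h) > q`. Finally, if two elements of an ordinary colour sum to more than `a + q`,
then their sum is `s` plus a multiple of `a` with `q < s ≤ 2q`, so its projection is `s`, which lies
in the special interval (`wsProj_eq`).
-/


/-- A set of natural numbers is sum-free: for all `a b ∈ A` (not necessarily
distinct), `a + b ∉ A`. -/
def SumFree (A : Set ℕ) : Prop := ∀ a ∈ A, ∀ b ∈ A, a + b ∉ A

/-- A set of natural numbers is weakly sum-free: for all `a b ∈ A` with
`a ≠ b`, `a + b ∉ A`. -/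
def WeaklySumFree (A : Set ℕ) : Prop := ∀ a ∈ A, ∀ b ∈ A, a ≠ b → a + b ∉ A

/-- `A 0, …, A (n-1)` is a partition of `{1, …, p}`. -/
def IsPartition {n : ℕ} (p : ℕ) (A : Fin n → Set ℕ) : Prop :=
  (∀ i j, i ≠ j → Disjoint (A i) (A j)) ∧ (⋃ i, A i) = Set.Icc 1 p

/-- An S-template with width `q` and `n` colors: a partition of `{1, …, q}`
into `n` sum-free subsets such that every subset except the last (special)
one satisfies: if `x, y` belong to it and `x + y > q`, then `x + y - q` does
not belong to it. -/
def IsSTemplate {n : ℕ} (q : ℕ) (A : Fin n → Set ℕ) : Prop :=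
  IsPartition q A ∧ (∀ i, SumFree (A i)) ∧
  ∀ i : Fin n, (i : ℕ) + 1 ≠ n →
    ∀ x ∈ A i, ∀ y ∈ A i, q < x + y → x + y - q ∉ A i

/-- The projection `π_{a,b}`: the unique element of `{b+1, …, a+b}` congruent
to `x` modulo `a` (for `a > b ≥ 1`). -/
def wsProj (a b x : ℕ) : ℕ := if x % a ≤ b then x % a + a else x % a

/-- A `b`-WS-template with width `a` and `n` colors: a partition of
`{1, …, a+b}` into `n` subsets, each weakly sum-free, each sum-free outside
`{1, …, b}`, the last (special) subset satisfying: if `x, y` belong to it and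
`x + y > b + 2a` then `x + y - 2a` does not belong to it, and every other
subset satisfying: if `x, y` belong to it and `x + y > a + b` then
`π_{a,b}(x + y)` does not belong to it. -/
def IsWSTemplate {n : ℕ} (a b : ℕ) (A : Fin n → Set ℕ) : Prop :=
  IsPartition (a + b) A ∧
  (∀ i, WeaklySumFree (A i)) ∧
  (∀ i, SumFree (A i \ Set.Icc 1 b)) ∧
  (∀ i : Fin n, (i : ℕ) + 1 = n →
    ∀ x ∈ A i, ∀ y ∈ A i, b + 2 * a < x + y → x + y - 2 * a ∉ A i) ∧
  (∀ i : Fin n, (i : ℕ) + 1 ≠ n →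
    ∀ x ∈ A i, ∀ y ∈ A i, a + b < x + y → wsProj a b (x + y) ∉ A i)

/-- `wsProj a b` recovers the representative in `{b+1, …, a+b}` of a residue class modulo `a`. -/
theorem wsProj_eq {a b s : ℕ} (k : ℕ) (hba : b < a) (hs : b < s) (hs' : s ≤ a + b) :
    wsProj a b (s + a * k) = s := by
  unfold wsProj
  rw [Nat.add_mul_mod_self_left]
  rcases lt_or_ge s a with h | h
  · rw [Nat.mod_eq_of_lt h, if_neg (by omega)]
  · have : s % a = s - a := by
      rw [Nat.mod_eq_sub_mod h, Nat.mod_eq_of_lt (by omega)]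
    rw [this, if_pos (by omega)]
    omega

/-- The class `X ⊆ {1, …, q}` together with the translates by the width `q + ⌈q/2⌉ + 1` of its
elements among the `⌈q/2⌉` largest integers of `{1, …, q}`. -/
def extendClass (q : ℕ) (X : Set ℕ) : Set ℕ :=
  {x | x ∈ X ∨ ∃ t ∈ X, q + 1 ≤ t + (q + 1) / 2 ∧ x = (q + (q + 1) / 2 + 1) + t}

/-- Proposition 3.16 (lower bound): a weakly sum-free `n`-partition of
`{1, …, q}` yields a `q`-WS-template with width `q + ⌈q/2⌉ + 1` and `n + 1`
colors, i.e. `(3/2)·WS(n) + 1 ≤ WS⁺(n+1)`. -/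
theorem wstemplate_of_weak_schur_partition (n q : ℕ) (hn : 0 < n)
    (hq : 0 < q)
    (A : Fin n → Set ℕ) (hA : IsPartition q A)
    (hAwsf : ∀ i, WeaklySumFree (A i)) :
    ∃ B : Fin (n + 1) → Set ℕ, IsWSTemplate (q + (q + 1) / 2 + 1) q B := by
  obtain ⟨hdisj, hun⟩ := hA
  have hbd : ∀ i, ∀ x ∈ A i, 1 ≤ x ∧ x ≤ q := fun i x hx => by
    have : x ∈ ⋃ i, A i := Set.mem_iUnion.2 ⟨i, hx⟩
    rwa [hun] at this
  have hcov : ∀ x, 1 ≤ x → x ≤ q → ∃ i, x ∈ A i := fun x h1 h2 => by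
    have : x ∈ ⋃ i, A i := by rw [hun]; exact ⟨h1, h2⟩
    exact Set.mem_iUnion.1 this
  have huniq : ∀ i j x, x ∈ A i → x ∈ A j → i = j := fun i j x hi hj => by
    by_contra hne
    exact Set.disjoint_left.1 (hdisj i j hne) hi hj
  have hspec : ∀ i, ∀ x ∈ extendClass q (A i), ¬ (q + 1 ≤ x ∧ x ≤ 2 * q + 1) := by
    rintro i x (hx | ⟨t, ht, h1, rfl⟩) ⟨h2, h3⟩
    · have := hbd i x hx
      omega
    · omega
  refine ⟨Fin.snoc (fun i => extendClass q (A i)) (Set.Icc (q + 1) (2 * q + 1)),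
    ⟨?_, ?_⟩, ?_, ?_, ?_, ?_⟩
  · intro i j hij
    rw [Set.disjoint_left]
    intro x
    induction i using Fin.lastCases with
    | last =>
      induction j using Fin.lastCases with
      | last => exact absurd rfl hij
      | cast j =>
        rw [Fin.snoc_last, Fin.snoc_castSucc]
        exact fun h1 h2 => hspec j x h2 h1
    | cast i =>
      induction j using Fin.lastCases with
      | last =>
        rw [Fin.snoc_last, Fin.snoc_castSucc]
        exact fun h1 h2 => hspec i x h1 h2
      | cast j =>
        rw [Fin.snoc_castSucc, Fin.snoc_castSucc]
        have hne : i ≠ j := fun h => hij (by rw [h])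
        rintro (hx | ⟨t, ht, h1, rfl⟩) (hy | ⟨u, hu, h2, h3⟩)
        · exact hne (huniq i j x hx hy)
        · have := hbd i _ hx
          omega
        · have := hbd j _ hy
          omega
        · obtain rfl : t = u := by omega
          exact hne (huniq i j t ht hu)
  · ext x
    rw [Set.mem_iUnion]
    constructor
    · rintro ⟨i, hi⟩
      induction i using Fin.lastCases with
      | last =>
        rw [Fin.snoc_last] at hi
        obtain ⟨h1, h2⟩ := hi
        constructor <;> omega
      | cast i =>
        rw [Fin.snoc_castSucc] at hi
        rcases hi with hx | ⟨t, ht, h1, rfl⟩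
        · have := hbd i x hx
          constructor <;> omega
        · have := hbd i t ht
          constructor <;> omega
    · rintro ⟨h1, h2⟩
      by_cases h3 : x ≤ q
      · obtain ⟨i, hi⟩ := hcov x h1 h3
        refine ⟨i.castSucc, ?_⟩
        rw [Fin.snoc_castSucc]
        exact Or.inl hi
      by_cases h4 : x ≤ 2 * q + 1
      · refine ⟨Fin.last n, ?_⟩
        rw [Fin.snoc_last]
        constructor <;> omega
      · obtain ⟨i, hi⟩ := hcov (x - (q + (q + 1) / 2 + 1)) (by omega) (by omega)
        refine ⟨i.castSucc, ?_⟩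
        rw [Fin.snoc_castSucc]
        exact Or.inr ⟨_, hi, by omega, by omega⟩
  · intro i
    induction i using Fin.lastCases with
    | last =>
      rw [Fin.snoc_last]
      rintro x ⟨h1, h2⟩ y ⟨h3, h4⟩ _ ⟨h5, h6⟩
      omega
    | cast i =>
      rw [Fin.snoc_castSucc]
      rintro x (hx | ⟨t, ht, h1, rfl⟩) y (hy | ⟨u, hu, h2, rfl⟩) hne (hz | ⟨v, hv, h3, h4⟩)
      · exact hAwsf i x hx y hy hne hz
      · have := hbd i x hx
        have := hbd i y hy
        omega
      · have := hbd i _ hz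
        omega
      · have := hbd i v hv
        obtain rfl : v = x + u := by omega
        exact hAwsf i x hx u hu (by omega) hv
      · have := hbd i _ hz
        omega
      · have := hbd i v hv
        obtain rfl : v = t + y := by omega
        exact hAwsf i t ht y hy (by omega) hv
      · have := hbd i _ hz
        omega
      · have := hbd i v hv
        omega
  · intro i
    induction i using Fin.lastCases with
    | last =>
      rw [Fin.snoc_last]
      rintro x ⟨⟨h1, h2⟩, -⟩ y ⟨⟨h3, h4⟩, -⟩ ⟨⟨h5, h6⟩, -⟩
      omega
    | cast i =>
      rw [Fin.snoc_castSucc]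
      have key : ∀ x ∈ extendClass q (A i) \ Set.Icc 1 q,
          2 * q + 2 ≤ x ∧ x ≤ 2 * q + (q + 1) / 2 + 1 := by
        rintro x ⟨hx | ⟨t, ht, h1, rfl⟩, hn⟩
        · exact absurd (hbd i x hx) hn
        · have := hbd i t ht
          omega
      intro x hx y hy hz
      have := key x hx
      have := key y hy
      have := key _ hz
      omega
  · intro i hi
    obtain rfl : i = Fin.last n := Fin.ext (by simpa using hi)
    rw [Fin.snoc_last]
    rintro x ⟨h1, h2⟩ y ⟨h3, h4⟩ h5
    omega
  · intro i hi
    induction i using Fin.lastCases with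
    | last => exact absurd rfl hi
    | cast i =>
      rw [Fin.snoc_castSucc]
      intro x hx y hy hxy
      -- modulo the width, the sum is some `s` in the part `{q+1, …, 2q}` of the special interval
      obtain ⟨s, k, h1, h2, h3⟩ : ∃ s k, q < s ∧ s ≤ 2 * q ∧
          x + y = s + (q + (q + 1) / 2 + 1) * k := by
        rcases hx with hx | ⟨t, ht, ht', rfl⟩ <;> rcases hy with hy | ⟨u, hu, hu', rfl⟩
        · have := hbd i x hx
          have := hbd i y hy
          omega
        · have := hbd i x hx
          have := hbd i u hu
          exact ⟨x + u, 1, by omega, by omega, by omega⟩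
        · have := hbd i t ht
          have := hbd i y hy
          exact ⟨t + y, 1, by omega, by omega, by omega⟩
        · have := hbd i t ht
          have := hbd i u hu
          exact ⟨t + u, 2, by omega, by omega, by omega⟩
      rw [h3, wsProj_eq k (by omega) h1 (by omega)]
      exact fun h => hspec i s h ⟨by omega, by omega⟩
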